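/- arXiv:1902.02818 — 2 statements merged into one kernel-verified Lean document; each statement's English description precedes it below -/
import Mathlib

section
/- Let α ∈ (0,1). Suppose u : [0,1] → ℂ is absolutely continuous with u(1) = 0, and w ∈ L²(0,1) satisfies u′(x) = (I^α w)(x) for a.e. x ∈ (0,1). Then there is a constant c_α > 0, depending only on α, such that Re ∫₀¹ (−w(x)) · conj(u(x)) dx ≥ c_α ∫₀¹ |(I^{(1+α)/2} w)(x)|² dx. (Equivalently, Re⟨−Au, u⟩_{L²(0,1)} ≥ c_α ‖D^{(1+α)/2}u‖²_{L²(0,1)} for u in the domain of A = (d/dx)D^α.) -/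
/-!
The form `Re ⟨-Au, u⟩` is computed in the time domain, as the quadratic form of the covariance of a
fractional Brownian motion pinned at the point `1`.

Since `u(1) = 0`, `u(x) = -∫ₓ¹ I^α w`, and Fubini gives `⟨-Au, u⟩ = ∬ w(x) conj(w(y)) L(x,y)` with
`L(x,y) = ((1-y)^α - (x-y)₊^α) / Γ(α+1)`. Only the symmetric part of `L` contributes to the real
part, and `L(x,y) + L(y,x) = ((1-x)^α + (1-y)^α - |x-y|^α) / Γ(α+1)`.

On the other hand put `γ = (α-1)/2`, `h(r) = r₊^γ` and `k(s,x) = h(s-x) - h(s-1)` (the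
Mandelbrot–Van Ness kernel). By translation and scaling `∫_ℝ (h(s-a) - h(s-b))² ds = C |a-b|^α`
with `C = ∫_ℝ (h(r+1) - h(r))² dr ∈ (0,∞)`, so by polarization
`∫_ℝ k(s,x) k(s,y) ds = (C/2) ((1-x)^α + (1-y)^α - |x-y|^α)`. Hence `Re ⟨-Au, u⟩` is a positive
multiple of `∫_ℝ |∫₀¹ k(s,y) w(y) dy|² ds`. For `s ∈ (0,1)` the term `h(s-1)` vanishes and the inner
integral is `Γ((1+α)/2) I^{(1+α)/2} w(s)`, so restricting the outer integral to `(0,1)` yields the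
bound.
-/

open MeasureTheory Set Filter

/-- Riemann–Liouville fractional integral `I^γ f` on `(0,1)` (complex-valued),
with the convention `I⁰ f = f`. -/
noncomputable def fracInt (γ : ℝ) (f : ℝ → ℂ) (x : ℝ) : ℂ :=
  if γ = 0 then f x
  else ((Real.Gamma γ)⁻¹ : ℝ) • ∫ p in (0:ℝ)..x, (((x - p) ^ (γ - 1) : ℝ) : ℂ) * f p

/-- `f` is square integrable (and a.e. strongly measurable) on `(0,1)`: `f ∈ L²(0,1)`. -/
def SqIntOn (f : ℝ → ℂ) : Prop :=
  MeasureTheory.AEStronglyMeasurable f (MeasureTheory.volume.restrict (Set.Ioc (0:ℝ) 1)) ∧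
  MeasureTheory.IntegrableOn (fun x => ‖f x‖ ^ 2) (Set.Ioc (0:ℝ) 1)

/-- `(u, w)` lies in the graph of `A = (d/dx) D^α`:  `u` is absolutely continuous on `[0,1]`
with `u' = I^α w` a.e., `u(1) = 0`, and `w ∈ L²(0,1)`; then `A u = w`. -/
def InGraphA (α : ℝ) (u w : ℝ → ℂ) : Prop :=
  u 1 = 0 ∧ SqIntOn w ∧
  IntervalIntegrable (fracInt α w) MeasureTheory.volume 0 1 ∧
  ∀ x ∈ Set.Icc (0:ℝ) 1, u x = u 0 + ∫ t in (0:ℝ)..x, fracInt α w t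

/-- Square of the `L²(0,1)` norm. -/
noncomputable def L2normSq (f : ℝ → ℂ) : ℝ := ∫ x in (0:ℝ)..1, ‖f x‖ ^ 2

/-- Square of the Gagliardo seminorm of order `s` on `(0,1)`. -/
noncomputable def sobSeminormSq (s : ℝ) (u : ℝ → ℂ) : ℝ :=
  ∫ x in (0:ℝ)..1, ∫ y in (0:ℝ)..1, ‖u x - u y‖ ^ 2 / |x - y| ^ (1 + 2 * s)

/-- Square of the fractional Sobolev `H^s(0,1)` norm `N_s(u)`. -/
noncomputable def sobNormSq (s : ℝ) (u : ℝ → ℂ) : ℝ :=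
  L2normSq u + sobSeminormSq s u

namespace FracCoercive

/-! ### The truncated power -/

/-- The truncated power `r₊^γ`, with value `0` for `r ≤ 0` (also when `γ ≤ 0`). -/
noncomputable def tpow (γ r : ℝ) : ℝ := if 0 < r then r ^ γ else 0

/-- Lebesgue measure on `(0,1]`. -/
noncomputable def mu : Measure ℝ := volume.restrict (Ioc (0:ℝ) 1)

instance : IsFiniteMeasure mu := by unfold mu; infer_instance

lemma measurable_tpow (γ : ℝ) : Measurable (tpow γ) := by
  unfold tpow
  exact Measurable.ite measurableSet_Ioi (by fun_prop) measurable_const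

lemma tpow_nonneg (γ r : ℝ) : 0 ≤ tpow γ r := by
  unfold tpow; split_ifs with h
  · positivity
  · exact le_rfl

lemma tpow_of_pos {γ r : ℝ} (h : 0 < r) : tpow γ r = r ^ γ := by simp [tpow, h]

lemma tpow_of_nonpos {γ r : ℝ} (h : r ≤ 0) : tpow γ r = 0 := by simp [tpow, not_lt.2 h]

lemma tpow_mul {γ d : ℝ} (hd : 0 < d) (r : ℝ) : tpow γ (d * r) = d ^ γ * tpow γ r := by
  by_cases hr : 0 < r
  · rw [tpow_of_pos hr, tpow_of_pos (mul_pos hd hr), Real.mul_rpow hd.le hr.le]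
  · rw [tpow_of_nonpos (not_lt.1 hr),
      tpow_of_nonpos (mul_nonpos_of_nonneg_of_nonpos hd.le (not_lt.1 hr)), mul_zero]

lemma intervalIntegrable_tpow_zero {α : ℝ} (hα : 0 < α) (a : ℝ) :
    IntervalIntegrable (tpow (α - 1)) volume 0 a ∧
      ∫ r in (0:ℝ)..a, tpow (α - 1) r = tpow α a / α := by
  rcases le_or_gt a 0 with ha | ha
  · have hz : ∀ r ∈ uIoc (0:ℝ) a, tpow (α - 1) r = 0 := by
      intro r hr
      rw [uIoc_of_ge ha] at hr
      exact tpow_of_nonpos hr.2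
    constructor
    · exact (intervalIntegrable_const (c := (0:ℝ))).congr (fun r hr => (hz r hr).symm)
    · rw [intervalIntegral.integral_congr_ae (g := fun _ => (0:ℝ)) (Eventually.of_forall hz), tpow_of_nonpos ha]
      simp
  · have hz : ∀ r ∈ uIoc (0:ℝ) a, r ^ (α - 1) = tpow (α - 1) r := by
      intro r hr
      rw [uIoc_of_le ha.le] at hr
      exact (tpow_of_pos hr.1).symm
    constructor
    · exact (intervalIntegral.intervalIntegrable_rpow' (by linarith)).congr hz
    · rw [← intervalIntegral.integral_congr_ae (Eventually.of_forall hz), integral_rpow (Or.inl (by linarith)),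
        tpow_of_pos ha, sub_add_cancel, Real.zero_rpow hα.ne', sub_zero]

lemma intervalIntegrable_tpow {α : ℝ} (hα : 0 < α) (a b : ℝ) :
    IntervalIntegrable (tpow (α - 1)) volume a b :=
  (intervalIntegrable_tpow_zero hα a).1.symm.trans (intervalIntegrable_tpow_zero hα b).1

lemma integral_tpow_sub {α : ℝ} (hα : 0 < α) (a b p : ℝ) :
    ∫ t in a..b, tpow (α - 1) (t - p) = (tpow α (b - p) - tpow α (a - p)) / α := by
  rw [intervalIntegral.integral_comp_sub_right (fun t => tpow (α - 1) t) p,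
    ← intervalIntegral.integral_interval_sub_left (intervalIntegrable_tpow_zero hα _).1
      (intervalIntegrable_tpow_zero hα _).1,
    (intervalIntegrable_tpow_zero hα _).2, (intervalIntegrable_tpow_zero hα _).2, sub_div]

lemma tpow_le_one {α r : ℝ} (hα : 0 < α) (hr : r ≤ 1) : tpow α r ≤ 1 := by
  rcases le_or_gt r 0 with h | h
  · rw [tpow_of_nonpos h]; exact zero_le_one
  · rw [tpow_of_pos h]; exact Real.rpow_le_one h.le hr hα.le

lemma tpow_add_tpow_neg {α : ℝ} (hα : 0 < α) (r : ℝ) : tpow α r + tpow α (-r) = |r| ^ α := by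
  rcases lt_trichotomy r 0 with h | h | h
  · rw [tpow_of_nonpos h.le, tpow_of_pos (neg_pos.2 h), abs_of_neg h, zero_add]
  · simp [h, tpow, Real.zero_rpow hα.ne']
  · rw [tpow_of_pos h, tpow_of_nonpos (by linarith), abs_of_pos h, add_zero]

/-! ### The increments of the truncated power in `L²(ℝ)` -/

/-- The squared unit increment of `r₊^γ`. -/
noncomputable def incr (γ r : ℝ) : ℝ := (tpow γ (r + 1) - tpow γ r) ^ 2

lemma measurable_incr (γ : ℝ) : Measurable (incr γ) :=
  (((measurable_tpow γ).comp (measurable_id.add_const 1)).sub (measurable_tpow γ)).pow_const 2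

lemma tpow_sq {α r : ℝ} (h : 0 < r) : tpow ((α - 1) / 2) r ^ 2 = tpow (α - 1) r := by
  rw [tpow_of_pos h, tpow_of_pos h, ← Real.rpow_natCast, ← Real.rpow_mul h.le]
  congr 1; push_cast; ring

lemma tpow_succ_le {γ r : ℝ} (hγ : γ ≤ 0) (h : 0 < r) : tpow γ (r + 1) ≤ tpow γ r := by
  rw [tpow_of_pos h, tpow_of_pos (by linarith)]
  exact Real.rpow_le_rpow_of_nonpos h (by linarith) hγ

/-- The decay at infinity which makes the increment square integrable. -/
lemma tpow_sub_succ_le {γ r : ℝ} (h0 : γ ≤ 0) (h1 : -1 ≤ γ) (h : 1 < r) :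
    tpow γ r - tpow γ (r + 1) ≤ r⁻¹ := by
  have hr : 0 < r := by linarith
  rw [tpow_of_pos hr, tpow_of_pos (by linarith)]
  have e : (r + 1) ^ γ = r ^ γ * (1 + r⁻¹) ^ γ := by
    rw [← Real.mul_rpow hr.le (by positivity)]; congr 1; field_simp
  have hb : (1 + r⁻¹) ^ (-1:ℝ) ≤ (1 + r⁻¹) ^ γ :=
    Real.rpow_le_rpow_of_exponent_le (by have := inv_pos.2 hr; linarith) h1
  rw [Real.rpow_neg_one] at hb
  have hc : 1 - r⁻¹ ≤ (1 + r⁻¹)⁻¹ := by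
    have hi := inv_pos.2 hr
    rw [inv_eq_one_div (1 + r⁻¹), le_div_iff₀ (by positivity)]
    nlinarith
  have hd : r ^ γ ≤ 1 := Real.rpow_le_one_of_one_le_of_nonpos h.le h0
  have he : 0 ≤ r ^ γ := by positivity
  have hi := inv_pos.2 hr
  rw [e]
  nlinarith

lemma integrable_incr {α : ℝ} (hα : α ∈ Ioo (0:ℝ) 1) : Integrable (incr ((α - 1) / 2)) := by
  obtain ⟨h0, h1⟩ := hα
  set γ := (α - 1) / 2 with hγ
  have hm := (measurable_incr γ).aestronglyMeasurable (μ := volume)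
  have A : IntegrableOn (incr γ) (Iic (-1)) := by
    refine (integrableOn_zero (ε' := ℝ)).congr_fun (fun r hr => ?_) measurableSet_Iic
    have hr' : r ≤ -1 := hr
    simp [incr, tpow_of_nonpos (show r + 1 ≤ 0 by linarith), tpow_of_nonpos (show r ≤ 0 by linarith)]
  have B : IntegrableOn (incr γ) (Ioc (-1) 0) := by
    have := ((intervalIntegrable_tpow h0 0 1).comp_add_right 1)
    simp only [zero_sub, sub_self] at this
    rw [intervalIntegrable_iff_integrableOn_Ioc_of_le (by norm_num)] at this
    refine this.congr_fun (fun r hr => ?_) measurableSet_Ioc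
    simp only [incr]
    rw [tpow_of_nonpos hr.2, sub_zero, hγ, tpow_sq (by linarith [hr.1])]
  have C : IntegrableOn (incr γ) (Ioc 0 1) := by
    have := intervalIntegrable_tpow h0 0 1
    rw [intervalIntegrable_iff_integrableOn_Ioc_of_le (by norm_num)] at this
    refine Integrable.mono' this hm.restrict ?_
    refine (ae_restrict_iff' measurableSet_Ioc).2 (Eventually.of_forall fun r hr => ?_)
    rw [← tpow_sq hr.1, ← hγ, incr, Real.norm_of_nonneg (sq_nonneg _)]
    have := tpow_succ_le (γ := γ) (by linarith) hr.1
    have := tpow_nonneg γ (r + 1)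
    nlinarith
  have D : IntegrableOn (incr γ) (Ioi 1) := by
    have := integrableOn_Ioi_rpow_of_lt (show (-2:ℝ) < -1 by norm_num) zero_lt_one
    refine Integrable.mono' this hm.restrict ?_
    refine (ae_restrict_iff' measurableSet_Ioi).2 (Eventually.of_forall fun r hr => ?_)
    have hr1 : 1 < r := hr
    have hr0 : 0 < r := by linarith
    have e1 := tpow_succ_le (γ := γ) (by linarith) hr0
    have e2 := tpow_sub_succ_le (γ := γ) (by linarith) (by linarith) hr1
    rw [incr, Real.norm_of_nonneg (sq_nonneg _), Real.rpow_neg hr0.le, Real.rpow_two, ← inv_pow,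
      ← neg_sub, neg_sq]
    exact pow_le_pow_left₀ (by linarith) e2 2
  have hu : (Iic (-1:ℝ) ∪ Ioc (-1) 0) ∪ (Ioc 0 1 ∪ Ioi 1) = univ := by
    rw [Iic_union_Ioc_eq_Iic (by norm_num), Ioc_union_Ioi_eq_Ioi (by norm_num), Iic_union_Ioi]
  rw [← integrableOn_univ, ← hu]
  exact (A.union B).union (C.union D)

lemma integral_incr_pos {α : ℝ} (hα : α ∈ Ioo (0:ℝ) 1) : 0 < ∫ r, incr ((α - 1) / 2) r := by
  rw [integral_pos_iff_support_of_nonneg (f := incr ((α - 1) / 2)) (fun r => sq_nonneg _)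
    (integrable_incr hα)]
  have : Ioo (-1:ℝ) 0 ⊆ Function.support (incr ((α - 1) / 2)) := by
    intro r hr
    rw [Function.mem_support, incr, tpow_of_nonpos hr.2.le, sub_zero,
      tpow_sq (by linarith [hr.1]), tpow_of_pos (by linarith [hr.1])]
    exact (Real.rpow_pos_of_pos (by linarith [hr.1]) _).ne'
  refine lt_of_lt_of_le ?_ (measure_mono this)
  simp

/-- Translation invariance and homogeneity: the squared `L²` distance between the translates of
`r₊^{(α-1)/2}` by `a` and `b` is a multiple of `|a-b|^α`. -/
lemma increment {α : ℝ} (hα : α ∈ Ioo (0:ℝ) 1) (a b : ℝ) :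
    Integrable (fun s => (tpow ((α - 1) / 2) (s - a) - tpow ((α - 1) / 2) (s - b)) ^ 2) ∧
      ∫ s, (tpow ((α - 1) / 2) (s - a) - tpow ((α - 1) / 2) (s - b)) ^ 2 =
        (∫ r, incr ((α - 1) / 2) r) * |a - b| ^ α := by
  have key : ∀ a b : ℝ, a < b →
      Integrable (fun s => (tpow ((α - 1) / 2) (s - a) - tpow ((α - 1) / 2) (s - b)) ^ 2) ∧
      ∫ s, (tpow ((α - 1) / 2) (s - a) - tpow ((α - 1) / 2) (s - b)) ^ 2 =
        (∫ r, incr ((α - 1) / 2) r) * |a - b| ^ α := by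
    intro a b hab
    have hd : 0 < b - a := by linarith
    have e : (fun s => (tpow ((α - 1) / 2) (s - a) - tpow ((α - 1) / 2) (s - b)) ^ 2) =
        fun s => (b - a) ^ (α - 1) * incr ((α - 1) / 2) ((s - b) / (b - a)) := by
      funext s
      have e1 : s - a = (b - a) * ((s - b) / (b - a) + 1) := by field_simp; ring
      have e2 : s - b = (b - a) * ((s - b) / (b - a)) := by field_simp
      have e3 : ((b - a) ^ ((α - 1) / 2)) ^ 2 = (b - a) ^ (α - 1) := by
        have := tpow_sq (α := α) hd
        rwa [tpow_of_pos hd, tpow_of_pos hd] at this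
      rw [incr, ← e3, ← mul_pow, mul_sub, ← tpow_mul hd, ← tpow_mul hd, ← e1, ← e2]
    have hi := (integrable_incr hα).comp_div hd.ne'
    rw [e]
    refine ⟨(hi.comp_sub_right b).const_mul _, ?_⟩
    rw [integral_const_mul,
      integral_sub_right_eq_self (fun s => incr ((α - 1) / 2) (s / (b - a))) b,
      Measure.integral_comp_div, abs_of_pos hd, abs_of_neg (by linarith), neg_sub, smul_eq_mul]
    have : (b - a) ^ α = (b - a) ^ (α - 1) * (b - a) := by
      rw [← Real.rpow_add_one hd.ne']; simp
    rw [this]; ring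
  rcases lt_trichotomy a b with h | h | h
  · exact key a b h
  · subst h
    simp [Real.zero_rpow hα.1.ne']
  · have := key b a h
    rw [abs_sub_comm] at this
    simpa only [sub_sq_comm] using this

/-! ### The Mandelbrot–Van Ness kernel -/

/-- The Mandelbrot–Van Ness kernel `(s-x)₊^γ - (s-1)₊^γ`, with base point `1` and
`γ = (α-1)/2`. -/
noncomputable def ker (α s x : ℝ) : ℝ := tpow ((α - 1) / 2) (s - x) - tpow ((α - 1) / 2) (s - 1)

/-- The symmetric kernel `(1-x)^α + (1-y)^α - |x-y|^α`, which up to a factor is the covariance of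
fractional Brownian motion of Hurst index `α/2` pinned at `1`. -/
noncomputable def cov (α x y : ℝ) : ℝ := |x - 1| ^ α + |y - 1| ^ α - |x - y| ^ α

lemma measurable_ker (α : ℝ) : Measurable (fun z : ℝ × ℝ => ker α z.1 z.2) := by
  unfold ker
  exact ((measurable_tpow _).comp (measurable_fst.sub measurable_snd)).sub
    ((measurable_tpow _).comp (measurable_fst.sub_const 1))

lemma integrable_ker_sq {α : ℝ} (hα : α ∈ Ioo (0:ℝ) 1) (x : ℝ) :
    Integrable (fun s => ker α s x ^ 2) := (increment hα x 1).1

lemma ker_mul_eq (α s x y : ℝ) : ker α s x * ker α s y = 2⁻¹ * (ker α s x ^ 2 + ker α s y ^ 2 -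
    (tpow ((α - 1) / 2) (s - x) - tpow ((α - 1) / 2) (s - y)) ^ 2) := by
  unfold ker; ring

lemma integrable_ker_mul {α : ℝ} (hα : α ∈ Ioo (0:ℝ) 1) (x y : ℝ) :
    Integrable (fun s => ker α s x * ker α s y) := by
  simp only [ker_mul_eq]
  exact (((integrable_ker_sq hα x).add (integrable_ker_sq hα y)).sub
    (increment hα x y).1).const_mul _

lemma integral_ker_mul {α : ℝ} (hα : α ∈ Ioo (0:ℝ) 1) (x y : ℝ) :
    ∫ s, ker α s x * ker α s y = (∫ r, incr ((α - 1) / 2) r) / 2 * cov α x y := by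
  simp only [ker_mul_eq]
  have hadd : Integrable (fun s => ker α s x ^ 2 + ker α s y ^ 2) :=
    (integrable_ker_sq hα x).add (integrable_ker_sq hα y)
  rw [integral_const_mul, integral_sub hadd (increment hα x y).1, integral_add (integrable_ker_sq hα x) (integrable_ker_sq hα y)]
  simp only [ker]
  rw [(increment hα x 1).2, (increment hα y 1).2, (increment hα x y).2, cov]
  ring

lemma integral_abs_ker_mul_le {α : ℝ} (hα : α ∈ Ioo (0:ℝ) 1) {x y : ℝ} (hx : x ∈ Ioc (0:ℝ) 1)
    (hy : y ∈ Ioc (0:ℝ) 1) : ∫ s, |ker α s x * ker α s y| ≤ ∫ r, incr ((α - 1) / 2) r := by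
  have hb : ∀ x ∈ Ioc (0:ℝ) 1, ∫ s, ker α s x ^ 2 ≤ ∫ r, incr ((α - 1) / 2) r := by
    intro x hx
    simp only [ker]
    rw [(increment hα x 1).2]
    refine mul_le_of_le_one_right (integral_incr_pos hα).le ?_
    refine Real.rpow_le_one (abs_nonneg _) ?_ hα.1.le
    rw [abs_le]; constructor <;> linarith [hx.1, hx.2]
  have : ∫ s, |ker α s x * ker α s y| ≤ ∫ s, 2⁻¹ * (ker α s x ^ 2 + ker α s y ^ 2) := by
    refine integral_mono (integrable_ker_mul hα x y).abs
      (((integrable_ker_sq hα x).add (integrable_ker_sq hα y)).const_mul _) (fun s => ?_)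
    simp only [abs_mul]
    rw [← sq_abs (ker α s x), ← sq_abs (ker α s y)]
    nlinarith [sq_nonneg (|ker α s x| - |ker α s y|)]
  rw [integral_const_mul, integral_add (integrable_ker_sq hα x) (integrable_ker_sq hα y)] at this
  linarith [hb x hx, hb y hy]

/-! ### The two quadratic forms -/

/-- The density `w(x) conj(w(y))` of the quadratic forms. -/
noncomputable def dens (w : ℝ → ℂ) (z : ℝ × ℝ) : ℂ := w z.1 * (starRingEnd ℂ) (w z.2)

lemma integrable_conj {X : Type*} [MeasurableSpace X] {m : Measure X} {w : X → ℂ}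
    (hw : Integrable w m) : Integrable (fun y => (starRingEnd ℂ) (w y)) m :=
  (Complex.conjCLE : ℂ →L[ℝ] ℂ).integrable_comp hw

lemma integrable_dens {w : ℝ → ℂ} (hw : Integrable w mu) : Integrable (dens w) (mu.prod mu) :=
  hw.mul_prod (integrable_conj hw)

lemma ae_mu : ∀ᵐ x ∂mu, x ∈ Ioc (0:ℝ) 1 := ae_restrict_mem measurableSet_Ioc

lemma ae_mu_prod : ∀ᵐ z ∂(mu.prod mu), z.1 ∈ Ioc (0:ℝ) 1 ∧ z.2 ∈ Ioc (0:ℝ) 1 :=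
  (Measure.quasiMeasurePreserving_fst.ae ae_mu).and (Measure.quasiMeasurePreserving_snd.ae ae_mu)

lemma integrable_triple {α : ℝ} (hα : α ∈ Ioo (0:ℝ) 1) {w : ℝ → ℂ} (hw : Integrable w mu) :
    Integrable (fun q : ℝ × (ℝ × ℝ) => ((ker α q.1 q.2.1 * ker α q.1 q.2.2 : ℝ) : ℂ) * dens w q.2)
      (volume.prod (mu.prod mu)) := by
  have hm1 : Measurable (fun q : ℝ × (ℝ × ℝ) => ((ker α q.1 q.2.1 * ker α q.1 q.2.2 : ℝ) : ℂ)) := by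
    refine Complex.measurable_ofReal.comp (Measurable.mul ?_ ?_)
    · exact (measurable_ker α).comp (measurable_fst.prodMk (measurable_fst.comp measurable_snd))
    · exact (measurable_ker α).comp (measurable_fst.prodMk (measurable_snd.comp measurable_snd))
  have hm : AEStronglyMeasurable (fun q : ℝ × (ℝ × ℝ) =>
      ((ker α q.1 q.2.1 * ker α q.1 q.2.2 : ℝ) : ℂ) * dens w q.2) (volume.prod (mu.prod mu)) :=
    hm1.aestronglyMeasurable.mul
      ((integrable_dens hw).aestronglyMeasurable.comp_snd (μ := (volume : Measure ℝ)))
  rw [integrable_prod_iff' hm]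
  constructor
  · refine Eventually.of_forall fun z => ?_
    exact ((integrable_ker_mul hα z.1 z.2).ofReal (𝕜 := ℂ)).mul_const (dens w z)
  · refine Integrable.mono' ((integrable_dens hw).norm.const_mul (∫ r, incr ((α - 1) / 2) r))
      hm.norm.prod_swap.integral_prod_right' ?_
    filter_upwards [ae_mu_prod] with z hz
    simp only [norm_mul, Complex.norm_real]
    rw [integral_mul_const, Real.norm_of_nonneg (by positivity)]
    refine mul_le_mul_of_nonneg_right ?_ (norm_nonneg _)
    have := integral_abs_ker_mul_le hα hz.1 hz.2
    simpa only [abs_mul, Real.norm_eq_abs] using this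

/-- The transform of `w` by the Mandelbrot–Van Ness kernel; on `(0,1)` it is a multiple of
`I^{(1+α)/2} w`. -/
noncomputable def vt (α : ℝ) (w : ℝ → ℂ) (s : ℝ) : ℂ := ∫ y, (ker α s y : ℂ) * w y ∂mu

lemma vt_norm_sq (α : ℝ) (w : ℝ → ℂ) (s : ℝ) : ((‖vt α w s‖ ^ 2 : ℝ) : ℂ) =
    ∫ z, ((ker α s z.1 * ker α s z.2 : ℝ) : ℂ) * dens w z ∂(mu.prod mu) := by
  have e : ∀ z : ℝ × ℝ, ((ker α s z.1 * ker α s z.2 : ℝ) : ℂ) * dens w z =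
      ((ker α s z.1 : ℂ) * w z.1) * (starRingEnd ℂ) ((ker α s z.2 : ℂ) * w z.2) := by
    intro z; simp only [dens, map_mul, Complex.conj_ofReal]; push_cast; ring
  simp only [e]
  rw [integral_prod_mul (fun x => (ker α s x : ℂ) * w x)
    (fun x => (starRingEnd ℂ) ((ker α s x : ℂ) * w x)), integral_conj, Complex.mul_conj',
    ← vt]
  push_cast; rfl

lemma integrable_vt {α : ℝ} (hα : α ∈ Ioo (0:ℝ) 1) {w : ℝ → ℂ} (hw : Integrable w mu) :
    Integrable (fun s => ‖vt α w s‖ ^ 2) := by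
  have := (integrable_triple hα hw).integral_prod_left
  simp only [← vt_norm_sq] at this
  exact this.re

lemma integral_vt {α : ℝ} (hα : α ∈ Ioo (0:ℝ) 1) {w : ℝ → ℂ} (hw : Integrable w mu) :
    ∫ s, ‖vt α w s‖ ^ 2 = (∫ r, incr ((α - 1) / 2) r) / 2 *
      (∫ z, (cov α z.1 z.2 : ℂ) * dens w z ∂(mu.prod mu)).re := by
  have h1 : ((∫ s, ‖vt α w s‖ ^ 2 : ℝ) : ℂ) = ((∫ r, incr ((α - 1) / 2) r) / 2 : ℝ) *
      ∫ z, (cov α z.1 z.2 : ℂ) * dens w z ∂(mu.prod mu) := by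
    rw [← integral_complex_ofReal]
    simp only [vt_norm_sq]
    rw [integral_integral_swap (f := fun s (z : ℝ × ℝ) =>
      ((ker α s z.1 * ker α s z.2 : ℝ) : ℂ) * dens w z) (integrable_triple hα hw),
      ← integral_const_mul]
    congr 1; funext z
    rw [integral_mul_const, integral_complex_ofReal, integral_ker_mul hα]
    push_cast; ring
  have h2 := congrArg Complex.re h1
  rwa [Complex.ofReal_re, Complex.re_ofReal_mul] at h2

/-- `fracInt` as an integral over the fixed interval `(0,1]`. The case `γ = 1` is excluded because
`0 ^ 0 = 1` makes the kernels differ on the diagonal. -/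
lemma fracInt_eq {γ : ℝ} (h0 : γ ≠ 0) (h1 : γ ≠ 1) (w : ℝ → ℂ) {t : ℝ} (ht : t ∈ Ioc (0:ℝ) 1) :
    fracInt γ w t = ((Real.Gamma γ)⁻¹ : ℝ) * ∫ p, (tpow (γ - 1) (t - p) : ℂ) * w p ∂mu := by
  rw [fracInt, if_neg h0, Complex.real_smul]
  congr 1
  rw [intervalIntegral.integral_of_le ht.1.le, mu,
    setIntegral_eq_of_subset_of_forall_sdiff_eq_zero (s := Ioc 0 t) measurableSet_Ioc
      (Ioc_subset_Ioc_right ht.2)]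
  · refine setIntegral_congr_fun measurableSet_Ioc fun p hp => ?_
    rcases hp.2.lt_or_eq with h | h
    · simp only [tpow_of_pos (sub_pos.2 h)]
    · simp [h, tpow, Real.zero_rpow (sub_ne_zero.2 h1)]
  · intro p hp
    have : t < p := by
      by_contra hlt
      exact hp.2 ⟨hp.1.1, not_lt.1 hlt⟩
    simp [tpow_of_nonpos (show t - p ≤ 0 by linarith)]

lemma fracInt_eq_vt {α : ℝ} (hα : α ∈ Ioo (0:ℝ) 1) (w : ℝ → ℂ) {t : ℝ} (ht : t ∈ Ioc (0:ℝ) 1) :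
    fracInt ((1 + α) / 2) w t = ((Real.Gamma ((1 + α) / 2))⁻¹ : ℝ) * vt α w t := by
  rw [fracInt_eq (by linarith [hα.1]) (by linarith [hα.2]) w ht, vt]
  congr 1
  refine integral_congr_ae (Eventually.of_forall fun p => ?_)
  simp only
  rw [ker, tpow_of_nonpos (show t - 1 ≤ 0 by linarith [ht.2]), sub_zero]
  congr 3
  rw [show (1 + α) / 2 - 1 = (α - 1) / 2 by ring]

/-- The kernel of `w ↦ Γ(α+1) ∫ₓ¹ I^α w`. -/
noncomputable def lker (α x y : ℝ) : ℝ := tpow α (1 - y) - tpow α (x - y)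

lemma lker_symm {α : ℝ} (hα : α ∈ Ioo (0:ℝ) 1) {x y : ℝ} (hx : x ≤ 1) (hy : y ≤ 1) :
    lker α x y + lker α y x = cov α x y := by
  have e1 := tpow_add_tpow_neg hα.1 (x - y)
  have e2 := tpow_add_tpow_neg hα.1 (1 - x)
  have e3 := tpow_add_tpow_neg hα.1 (1 - y)
  rw [tpow_of_nonpos (show -(1 - x) ≤ 0 by linarith), abs_sub_comm] at e2
  rw [tpow_of_nonpos (show -(1 - y) ≤ 0 by linarith), abs_sub_comm] at e3
  rw [neg_sub] at e1
  rw [lker, lker, cov]; linarith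

lemma integral_fracInt {α : ℝ} (hα : α ∈ Ioo (0:ℝ) 1) {w : ℝ → ℂ} (hw : Integrable w mu) {x : ℝ}
    (hx : x ∈ Ioc (0:ℝ) 1) : ∫ t in x..1, fracInt α w t =
      ((Real.Gamma (α + 1))⁻¹ : ℝ) * ∫ y, (lker α x y : ℂ) * w y ∂mu := by
  have hα0 := hα.1
  have hint : Integrable (fun q : ℝ × ℝ => (tpow (α - 1) (q.1 - q.2) : ℂ) * w q.2)
      ((volume.restrict (Ioc x 1)).prod mu) := by
    have hm1 : Measurable (fun q : ℝ × ℝ => (tpow (α - 1) (q.1 - q.2) : ℂ)) :=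
      Complex.measurable_ofReal.comp
        ((measurable_tpow _).comp (measurable_fst.sub measurable_snd))
    have hm : AEStronglyMeasurable (fun q : ℝ × ℝ => (tpow (α - 1) (q.1 - q.2) : ℂ) * w q.2)
        ((volume.restrict (Ioc x 1)).prod mu) :=
      hm1.aestronglyMeasurable.mul
        (hw.aestronglyMeasurable.comp_snd (μ := volume.restrict (Ioc x 1)))
    rw [integrable_prod_iff' hm]
    have hi : ∀ p, Integrable (fun t => tpow (α - 1) (t - p)) (volume.restrict (Ioc x 1)) := by
      intro p
      have := (intervalIntegrable_tpow hα0 (x - p) (1 - p)).comp_sub_right p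
      simp only [sub_add_cancel] at this
      rwa [intervalIntegrable_iff_integrableOn_Ioc_of_le hx.2] at this
    constructor
    · exact Eventually.of_forall fun p => ((hi p).ofReal (𝕜 := ℂ)).mul_const (w p)
    · refine Integrable.mono' (hw.norm.const_mul (1 / α))
        hm.norm.prod_swap.integral_prod_right' ?_
      filter_upwards [ae_mu] with p hp
      simp only [norm_mul, Complex.norm_real, Real.norm_of_nonneg (tpow_nonneg _ _)]
      rw [integral_mul_const, norm_mul, norm_norm]
      refine mul_le_mul_of_nonneg_right ?_ (norm_nonneg _)
      rw [Real.norm_of_nonneg (integral_nonneg fun t => tpow_nonneg _ _),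
        ← intervalIntegral.integral_of_le hx.2, integral_tpow_sub hα0]
      have := tpow_le_one hα0 (show 1 - p ≤ 1 by linarith [hp.1])
      have := tpow_nonneg α (x - p)
      gcongr
      linarith
  rw [intervalIntegral.integral_of_le hx.2,
    setIntegral_congr_fun (g := fun t => ((Real.Gamma α)⁻¹ : ℝ) *
      ∫ p, (tpow (α - 1) (t - p) : ℂ) * w p ∂mu) measurableSet_Ioc (fun t ht =>
      fracInt_eq hα0.ne' hα.2.ne w ⟨hx.1.trans ht.1, ht.2⟩), integral_const_mul,
    integral_integral_swap (f := fun t p => (tpow (α - 1) (t - p) : ℂ) * w p) hint,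
    Real.Gamma_add_one hα0.ne', mul_inv, mul_comm α⁻¹, Complex.ofReal_mul, mul_assoc,
    ← integral_const_mul ((α⁻¹ : ℝ) : ℂ)]
  congr 2; funext p
  rw [integral_mul_const, integral_complex_ofReal, ← intervalIntegral.integral_of_le hx.2,
    integral_tpow_sub hα0, lker, ← mul_assoc, ← Complex.ofReal_mul, div_eq_inv_mul]

lemma integrable_lker {α : ℝ} (hα : α ∈ Ioo (0:ℝ) 1) {w : ℝ → ℂ} (hw : Integrable w mu) :
    Integrable (fun z : ℝ × ℝ => (lker α z.1 z.2 : ℂ) * dens w z) (mu.prod mu) := by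
  have hm1 : Measurable (fun z : ℝ × ℝ => (lker α z.1 z.2 : ℂ)) :=
    Complex.measurable_ofReal.comp
      (((measurable_tpow _).comp (measurable_snd.const_sub 1)).sub
        ((measurable_tpow _).comp (measurable_fst.sub measurable_snd)))
  refine (integrable_dens hw).bdd_mul (c := 1) hm1.aestronglyMeasurable ?_
  filter_upwards [ae_mu_prod] with z hz
  rw [Complex.norm_real, Real.norm_eq_abs, lker, abs_le]
  have h1 := tpow_le_one hα.1 (show 1 - z.2 ≤ 1 by linarith [hz.2.1])
  have h2 := tpow_le_one hα.1 (show z.1 - z.2 ≤ 1 by linarith [hz.2.1, hz.1.2])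
  have h3 := tpow_nonneg α (1 - z.2)
  have h4 := tpow_nonneg α (z.1 - z.2)
  constructor <;> linarith

/-- Only the symmetric part of the kernel contributes to the real part of the form. -/
lemma re_integral_lker {α : ℝ} (hα : α ∈ Ioo (0:ℝ) 1) {w : ℝ → ℂ} (hw : Integrable w mu) :
    2 * (∫ z, (lker α z.1 z.2 : ℂ) * dens w z ∂(mu.prod mu)).re =
      (∫ z, (cov α z.1 z.2 : ℂ) * dens w z ∂(mu.prod mu)).re := by
  have hI := integrable_lker hα hw
  have e1 : ∫ z, (lker α z.2 z.1 : ℂ) * dens w z ∂(mu.prod mu) =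
      (starRingEnd ℂ) (∫ z, (lker α z.1 z.2 : ℂ) * dens w z ∂(mu.prod mu)) := by
    rw [← integral_conj, ← integral_prod_swap]
    congr 1; funext z
    simp [dens, mul_comm]
  have hI2 : Integrable (fun z : ℝ × ℝ => (lker α z.2 z.1 : ℂ) * dens w z) (mu.prod mu) := by
    refine (integrable_conj hI.swap).congr (Eventually.of_forall fun z => ?_)
    simp [dens, mul_comm]
  have e2 : ∫ z, (cov α z.1 z.2 : ℂ) * dens w z ∂(mu.prod mu) =
      ∫ z, ((lker α z.1 z.2 : ℂ) * dens w z + (lker α z.2 z.1 : ℂ) * dens w z) ∂(mu.prod mu) := by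
    refine integral_congr_ae ?_
    filter_upwards [ae_mu_prod] with z hz
    rw [← lker_symm hα hz.1.2 hz.2.2, ← add_mul]
    push_cast; rfl
  rw [e2, integral_add hI hI2, e1, Complex.add_re, Complex.conj_re, two_mul]

lemma SqIntOn.integrable {w : ℝ → ℂ} (h : SqIntOn w) : Integrable w mu := by
  have : MemLp w 2 mu := (memLp_two_iff_integrable_sq_norm h.1).2 h.2
  exact this.integrable (by norm_num)

lemma form_eq {α : ℝ} (hα : α ∈ Ioo (0:ℝ) 1) {u w : ℝ → ℂ} (h : InGraphA α u w) :
    (∫ x in (0:ℝ)..1, (-(w x)) * (starRingEnd ℂ) (u x)) = ((Real.Gamma (α + 1))⁻¹ : ℝ) *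
      ∫ z, (lker α z.1 z.2 : ℂ) * dens w z ∂(mu.prod mu) := by
  obtain ⟨hu1, hsq, hint, hu⟩ := h
  have hw := SqIntOn.integrable hsq
  have hux : ∀ x ∈ Ioc (0:ℝ) 1, u x = -∫ t in x..1, fracInt α w t := by
    intro x hx
    have e1 := hu 1 (by simp)
    rw [hu1] at e1
    rw [hu x ⟨hx.1.le, hx.2⟩, ← intervalIntegral.integral_interval_sub_left hint
      (hint.mono_set (by rw [uIcc_of_le hx.1.le, uIcc_of_le zero_le_one]
                         exact Icc_subset_Icc_right hx.2))]
    linear_combination -e1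
  rw [integral_prod _ (integrable_lker hα hw), ← integral_const_mul,
    intervalIntegral.integral_of_le zero_le_one, mu]
  refine setIntegral_congr_fun measurableSet_Ioc fun x hx => ?_
  simp only
  rw [hux x hx, integral_fracInt hα hw hx, map_neg, neg_mul_neg, map_mul, Complex.conj_ofReal,
    ← integral_conj, mul_left_comm, ← integral_const_mul]
  congr 2; funext y
  simp only [dens, map_mul, Complex.conj_ofReal]
  ring

end FracCoercive

open FracCoercive in
/-- coercivity of -(d/dx)D^a in terms of the L2 norm of
D^{(1+a)/2}u = I^{(1+a)/2}w. -/
theorem statement_0 (α : ℝ) (hα : α ∈ Set.Ioo (0:ℝ) 1) :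
    ∃ c > (0:ℝ), ∀ u w : ℝ → ℂ, InGraphA α u w →
      c * (∫ x in (0:ℝ)..1, ‖fracInt ((1 + α) / 2) w x‖ ^ 2) ≤
        (∫ x in (0:ℝ)..1, (-(w x)) * (starRingEnd ℂ) (u x)).re := by
  have hC := integral_incr_pos hα
  set C := ∫ r, incr ((α - 1) / 2) r with hCdef
  have hG1 : 0 < Real.Gamma (α + 1) := Real.Gamma_pos_of_pos (by linarith [hα.1])
  have hG2 : 0 < Real.Gamma ((1 + α) / 2) := Real.Gamma_pos_of_pos (by linarith [hα.1])
  refine ⟨Real.Gamma ((1 + α) / 2) ^ 2 / (Real.Gamma (α + 1) * C), by positivity, ?_⟩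
  intro u w h
  have hw := SqIntOn.integrable h.2.1
  have hV := integral_vt hα hw
  have hS := re_integral_lker hα hw
  rw [form_eq hα h, Complex.re_ofReal_mul]
  have e1 : ∫ x in (0:ℝ)..1, ‖fracInt ((1 + α) / 2) w x‖ ^ 2 =
      ((Real.Gamma ((1 + α) / 2))⁻¹) ^ 2 * ∫ x in Ioc (0:ℝ) 1, ‖vt α w x‖ ^ 2 := by
    rw [intervalIntegral.integral_of_le zero_le_one, ← integral_const_mul]
    refine setIntegral_congr_fun measurableSet_Ioc fun x hx => ?_
    rw [fracInt_eq_vt hα w hx, norm_mul, mul_pow, Complex.norm_real,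
      Real.norm_of_nonneg (inv_pos.2 hG2).le]
  have e2 : ∫ x in Ioc (0:ℝ) 1, ‖vt α w x‖ ^ 2 ≤ ∫ x, ‖vt α w x‖ ^ 2 :=
    setIntegral_le_integral (integrable_vt hα hw) (Eventually.of_forall fun _ => sq_nonneg _)
  rw [hV, ← hS, ← hCdef] at e2
  rw [e1]
  calc _ = (Real.Gamma (α + 1) * C)⁻¹ * ∫ x in Ioc (0:ℝ) 1, ‖vt α w x‖ ^ 2 := by field_simp
    _ ≤ (Real.Gamma (α + 1) * C)⁻¹ * _ := mul_le_mul_of_nonneg_left e2 (by positivity)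
    _ = _ := by field_simp
end

section
/- Let α ∈ (0,1). There is a constant c_α > 0, depending only on α, such that for every pair (u,w) in the graph of the operator A = (d/dx)D^α one has Re ∫₀¹ (−w(x)) · conj(u(x)) dx ≥ c_α N_{(1+α)/2}(u)², i.e. Re⟨−Au,u⟩_{L²(0,1)} ≥ c_α ‖u‖²_{H^{(1+α)/2}(0,1)}. -/
/-!
Write `f = u'`, extended by zero outside `(0,1]`. The proof compares both sides of the inequality
with the energy `J = ∬_{s < t} (t - s)^(-α) f(s) conj f(t) ds dt`.

* *The pairing.* Since `u(1) = 0`, exchanging integrals gives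
  `-∫ w conj u = ∫ (∫_0^t w) conj f(t) dt`. The beta integral
  `∫_p^t (t - s)^(-α) (s - p)^(α - 1) ds = B(α, 1 - α)` inverts `f = I^α w` to
  `∫_0^t (t - s)^(-α) f(s) ds = D ∫_0^t w` with `D = B(α, 1 - α) / Γ(α)` (`abel_der`). Hence
  `J = D * (-∫ w conj u)` (`energy_pairing`). The same computation with absolute values shows that
  `J` converges absolutely; only `w ∈ L¹` and `f ∈ L¹` are used.
* *The seminorm.* For `y < x`, `|u(x) - u(y)|² = 2 Re ∬_{y < s < t < x} f(s) conj f(t)`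
  (`normSq_integral`), and for fixed `s < t` the kernel `(x - y)^(-2-α)` integrates over
  `y < s`, `x > t` to `(t - s)^(-α) / (α (1 + α))` (`gagK_integral`). Fubini then gives the exact
  identity `∬_{y < x} |u(x) - u(y)|² / (x - y)^(2+α) = 2 Re J / (α (1 + α))` over the whole plane
  (`gagP_integral`), where `u` is extended as a primitive of `f`.
* *Conclusion.* The order `(1 + α) / 2` corresponds to the exponent `2 + α`, so the Gagliardo
  seminorm over `(0,1)²` is at most twice that plane integral (`seminorm_le`). The `L²` norm is
  controlled by the region `x ∈ (0,1)`, `y ∈ (1,2)`, where the extension of `u` vanishes at `y`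
  (`l2_le`).
-/


open MeasureTheory Set Filter

/-! ### Power kernels and the beta integral -/

/-- The causal power `x_+ ^ γ`: it is `x ^ γ` for `x > 0` and `0` for `x ≤ 0`. -/
noncomputable def kap (γ x : ℝ) : ℝ := if 0 < x then x ^ γ else 0

lemma kap_of_pos {γ x : ℝ} (h : 0 < x) : kap γ x = x ^ γ := if_pos h

lemma kap_of_nonpos {γ x : ℝ} (h : x ≤ 0) : kap γ x = 0 := if_neg h.not_gt

lemma kap_nonneg (γ x : ℝ) : 0 ≤ kap γ x := by
  unfold kap; split_ifs with h
  · exact Real.rpow_nonneg h.le _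
  · exact le_rfl

@[fun_prop] lemma measurable_kap (γ : ℝ) : Measurable (kap γ) := by
  unfold kap
  exact Measurable.ite measurableSet_Ioi (by fun_prop) measurable_const

/-- The beta integral `B(α, 1 - α)`. -/
noncomputable def betaC (α : ℝ) : ℝ := ∫ r, kap (-α) (1 - r) * kap (α - 1) r

lemma beta_integrand (α : ℝ) : (fun r => kap (-α) (1 - r) * kap (α - 1) r)
    = (Ioo (0:ℝ) 1).indicator (fun r => (1 - r) ^ (-α) * r ^ (α - 1)) := by
  ext r
  by_cases h0 : 0 < r
  · by_cases h1 : r < 1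
    · rw [indicator_of_mem (show r ∈ Ioo (0:ℝ) 1 from ⟨h0, h1⟩), kap_of_pos h0,
        kap_of_pos (by linarith)]
    · rw [indicator_of_notMem (fun h => h1 h.2), kap_of_nonpos (x := 1 - r) (by linarith), zero_mul]
  · rw [indicator_of_notMem (fun h => h0 h.1), kap_of_nonpos (x := r) (by linarith), mul_zero]

lemma beta_intervalIntegrable {α : ℝ} (hα : α ∈ Ioo (0:ℝ) 1) :
    IntegrableOn (fun r : ℝ => (1 - r) ^ (-α) * r ^ (α - 1)) (Ioo (0:ℝ) 1) := by
  have h := Complex.betaIntegral_convergent (u := (α : ℂ)) (v := ((1 - α : ℝ) : ℂ))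
    (by simpa using hα.1) (by simpa using hα.2)
  rw [intervalIntegrable_iff_integrableOn_Ioo_of_le zero_le_one] at h
  refine IntegrableOn.congr_fun h.norm ?_ measurableSet_Ioo
  intro r hr
  have e1 : ((α : ℂ) - 1) = ((α - 1 : ℝ) : ℂ) := by push_cast; ring
  have e2 : (((1 - α : ℝ) : ℂ) - 1) = ((-α : ℝ) : ℂ) := by push_cast; ring
  have e3 : (1 - (r : ℂ)) = ((1 - r : ℝ) : ℂ) := by push_cast; ring
  have h1 : 0 < 1 - r := by linarith [hr.2]
  simp only [norm_mul]
  rw [e1, e2, e3, Complex.norm_cpow_eq_rpow_re_of_pos hr.1, Complex.norm_cpow_eq_rpow_re_of_pos h1]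
  simp [mul_comm]

lemma beta_integrable {α : ℝ} (hα : α ∈ Ioo (0:ℝ) 1) :
    Integrable (fun r => kap (-α) (1 - r) * kap (α - 1) r) := by
  rw [beta_integrand, integrable_indicator_iff measurableSet_Ioo]
  exact beta_intervalIntegrable hα

lemma betaC_pos {α : ℝ} (hα : α ∈ Ioo (0:ℝ) 1) : 0 < betaC α := by
  have h := beta_intervalIntegrable hα
  rw [betaC, beta_integrand, integral_indicator measurableSet_Ioo, ← integral_Ioc_eq_integral_Ioo,
    ← intervalIntegral.integral_of_le zero_le_one]
  refine intervalIntegral.intervalIntegral_pos_of_pos_on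
    ((intervalIntegrable_iff_integrableOn_Ioo_of_le zero_le_one).2 h) ?_ one_pos
  intro r hr
  have h1 : 0 < 1 - r := by linarith [hr.2]
  have := hr.1
  positivity

lemma beta_scale {α p t : ℝ} (h : p < t) :
    (fun s => kap (-α) (t - s) * kap (α - 1) (s - p)) = fun s => (t - p)⁻¹ *
      (kap (-α) (1 - (t - p)⁻¹ * (s - p)) * kap (α - 1) ((t - p)⁻¹ * (s - p))) := by
  have hd : 0 < t - p := sub_pos.2 h
  ext s
  have e : 1 - (t - p)⁻¹ * (s - p) = (t - p)⁻¹ * (t - s) := by field_simp; ring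
  rw [e]
  have key : ∀ γ x : ℝ, kap γ ((t - p)⁻¹ * x) = (t - p) ^ (-γ) * kap γ x := by
    intro γ x
    by_cases hx : 0 < x
    · rw [kap_of_pos hx, kap_of_pos (by positivity),
        Real.mul_rpow (by positivity) hx.le, Real.inv_rpow hd.le, Real.rpow_neg hd.le]
    · push Not at hx
      rw [kap_of_nonpos hx, kap_of_nonpos (mul_nonpos_of_nonneg_of_nonpos (by positivity) hx),
        mul_zero]
  rw [key, key]
  have : (t - p)⁻¹ * ((t - p) ^ (- -α) * (t - p) ^ (-(α - 1))) = 1 := by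
    rw [← Real.rpow_add hd, show - -α + -(α - 1) = (1:ℝ) by ring, Real.rpow_one]
    field_simp
  linear_combination (-(kap (-α) (t - s) * kap (α - 1) (s - p))) * this

/-- The Abel kernels `x_+ ^ (-α)` and `x_+ ^ (α - 1)` convolve to a multiple of the Heaviside
function. -/
lemma beta_conv {α : ℝ} (hα : α ∈ Ioo (0:ℝ) 1) (t p : ℝ) :
    Integrable (fun s => kap (-α) (t - s) * kap (α - 1) (s - p)) ∧
    ∫ s, kap (-α) (t - s) * kap (α - 1) (s - p) = if p < t then betaC α else 0 := by
  by_cases h : p < t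
  · have hd : 0 < t - p := sub_pos.2 h
    rw [if_pos h, beta_scale h]
    constructor
    · refine Integrable.const_mul ?_ _
      exact (((beta_integrable hα).comp_mul_left' (inv_pos.2 hd).ne').comp_sub_right p)
    · rw [integral_const_mul, integral_sub_right_eq_self
        (fun s => kap (-α) (1 - (t - p)⁻¹ * s) * kap (α - 1) ((t - p)⁻¹ * s)) p,
        Measure.integral_comp_mul_left (fun s => kap (-α) (1 - s) * kap (α - 1) s)]
      rw [inv_inv, abs_of_pos hd, smul_eq_mul, betaC]
      field_simp
  · have : (fun s => kap (-α) (t - s) * kap (α - 1) (s - p)) = fun _ => 0 := by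
      ext s
      by_cases hs : s < t
      · rw [kap_of_nonpos (x := s - p) (by linarith), mul_zero]
      · rw [kap_of_nonpos (x := t - s) (by linarith), zero_mul]
    rw [this]
    simp [h]

/-! ### The Gagliardo kernel -/

lemma tail_pow {a : ℝ} (ha : a < -1) {c : ℝ} (hc : 0 < c) :
    Integrable ((Ioi c).indicator (fun z : ℝ => z ^ a)) ∧
    ∫ z, (Ioi c).indicator (fun z : ℝ => z ^ a) z = -c ^ (a + 1) / (a + 1) := by
  rw [integrable_indicator_iff measurableSet_Ioi, integral_indicator measurableSet_Ioi]
  exact ⟨integrableOn_Ioi_rpow_of_lt ha hc, integral_Ioi_rpow_of_lt ha hc⟩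

/-- The Gagliardo kernel of order `(1 + α) / 2` at `q = (x, y)`, restricted to
`y < s < t < x` where `p = (s, t)`. -/
noncomputable def gagK (α : ℝ) (p q : ℝ × ℝ) : ℝ :=
  if q.2 < p.1 ∧ p.1 < p.2 ∧ p.2 < q.1 then (q.1 - q.2) ^ (-2 - α) else 0

lemma gagK_nonneg (α : ℝ) (p q : ℝ × ℝ) : 0 ≤ gagK α p q := by
  unfold gagK; split_ifs with h
  · exact Real.rpow_nonneg (by linarith [h.1, h.2.1, h.2.2]) _
  · exact le_rfl

lemma measurable_gagK (α : ℝ) :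
    Measurable (fun z : (ℝ × ℝ) × (ℝ × ℝ) => gagK α z.1 z.2) := by
  have h : MeasurableSet {z : (ℝ × ℝ) × (ℝ × ℝ) |
      z.2.2 < z.1.1 ∧ z.1.1 < z.1.2 ∧ z.1.2 < z.2.1} := by
    have h1 : Measurable fun z : (ℝ × ℝ) × (ℝ × ℝ) => z.1.1 := by fun_prop
    have h2 : Measurable fun z : (ℝ × ℝ) × (ℝ × ℝ) => z.1.2 := by fun_prop
    have h3 : Measurable fun z : (ℝ × ℝ) × (ℝ × ℝ) => z.2.1 := by fun_prop
    have h4 : Measurable fun z : (ℝ × ℝ) × (ℝ × ℝ) => z.2.2 := by fun_prop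
    exact (measurableSet_lt h4 h1).inter ((measurableSet_lt h1 h2).inter (measurableSet_lt h2 h3))
  exact Measurable.ite h (by fun_prop) measurable_const

/-- Integrating the Gagliardo kernel twice produces the Riesz-type kernel `(t - s)_+ ^ (-α)`. -/
lemma gagK_integral {α : ℝ} (hα : 0 < α) (p : ℝ × ℝ) :
    Integrable (gagK α p) ∧
    ∫ q, gagK α p q = (α * (1 + α))⁻¹ * kap (-α) (p.2 - p.1) := by
  obtain ⟨s, t⟩ := p
  by_cases hst : s < t
  swap
  · have : gagK α (s, t) = fun _ => 0 := by
      ext q; exact if_neg (fun h => hst h.2.1)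
    rw [this, kap_of_nonpos (by simpa using hst)]
    simp
  have hrow : ∀ y, y < s → (fun x => gagK α (s, t) (x, y)) =
      fun x => (Ioi (t - y)).indicator (fun z : ℝ => z ^ (-2 - α)) (x - y) := by
    intro y hy
    ext x
    simp only [gagK, indicator, mem_Ioi, sub_lt_sub_iff_right, hy, hst, true_and]
  have hrow0 : ∀ y, ¬ y < s → (fun x => gagK α (s, t) (x, y)) = fun x => 0 := by
    intro y hy
    ext x
    exact if_neg (fun h => hy h.1)
  have hint : ∀ y, Integrable (fun x => gagK α (s, t) (x, y)) := by
    intro y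
    by_cases hy : y < s
    · rw [hrow y hy]
      exact (tail_pow (by linarith) (by linarith)).1.comp_sub_right y
    · rw [hrow0 y hy]; simp
  have hval : (fun y => ∫ x, gagK α (s, t) (x, y)) =
      fun y => (1 + α)⁻¹ * (Ioi (t - s)).indicator (fun z : ℝ => z ^ (-1 - α)) (t - y) := by
    ext y
    by_cases hy : y < s
    · rw [hrow y hy, integral_sub_right_eq_self
        ((Ioi (t - y)).indicator (fun z : ℝ => z ^ (-2 - α))) y,
        (tail_pow (by linarith) (by linarith)).2, indicator_of_mem (by simpa using hy)]
      rw [show -2 - α + 1 = -1 - α by ring, show (-1 - α) = -(1 + α) by ring]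
      field_simp
    · rw [hrow0 y hy, indicator_of_notMem (by simpa using hy)]; simp
  have hi : Integrable (gagK α (s, t)) := by
    rw [show (volume : Measure (ℝ × ℝ)) = volume.prod volume from rfl, integrable_prod_iff']
    · refine ⟨Eventually.of_forall hint, ?_⟩
      simp_rw [Real.norm_of_nonneg (gagK_nonneg _ _ _)]
      rw [hval]
      exact ((tail_pow (by linarith) (by linarith)).1.comp_sub_left t).const_mul _
    · exact ((measurable_gagK α).comp measurable_prodMk_left).aestronglyMeasurable
  refine ⟨hi, ?_⟩
  rw [show (volume : Measure (ℝ × ℝ)) = volume.prod volume from rfl] at hi ⊢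
  rw [integral_prod_symm _ hi, hval, integral_const_mul, integral_sub_left_eq_self
    ((Ioi (t - s)).indicator (fun z : ℝ => z ^ (-1 - α))),
    (tail_pow (by linarith) (by linarith)).2, kap_of_pos (by simpa using hst)]
  rw [show -1 - α + 1 = -α by ring]
  simp only [mul_inv]
  field_simp

/-! ### Inversion of the Abel equation -/

/-- The fractional integral `∫_{p < s} (s - p) ^ (α - 1) w(p) dp` over the whole line, without the
factor `1 / Γ(α)`. -/
noncomputable def rl (α : ℝ) (w : ℝ → ℂ) (s : ℝ) : ℂ := ∫ p, (kap (α - 1) (s - p) : ℂ) * w p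

lemma stronglyMeasurable_rl {α : ℝ} {w : ℝ → ℂ} (hw : StronglyMeasurable w) :
    StronglyMeasurable (rl α w) := by
  refine StronglyMeasurable.integral_prod_right
    (f := fun s p => (kap (α - 1) (s - p) : ℂ) * w p) ?_
  refine StronglyMeasurable.mul ?_ (hw.comp_measurable measurable_snd)
  exact Measurable.stronglyMeasurable (by fun_prop)

/-- Abel inversion: applying the kernel `x_+ ^ (-α)` to `rl α w` returns a multiple of the
primitive of `w`. -/
lemma abel_rl {α : ℝ} (hα : α ∈ Ioo (0:ℝ) 1) {w : ℝ → ℂ} (hw : StronglyMeasurable w)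
    (hwi : Integrable w) (t : ℝ) :
    Integrable (fun s => (kap (-α) (t - s) : ℂ) * rl α w s) ∧
    (∫ s, (kap (-α) (t - s) : ℂ) * rl α w s) = betaC α * ∫ p, (if p < t then w p else 0) ∧
    (∫ s, ‖(kap (-α) (t - s) : ℂ) * rl α w s‖) ≤ betaC α * ∫ p, ‖w p‖ := by
  have hB := betaC_pos hα
  set Φ : ℝ × ℝ → ℂ := fun z =>
    ((kap (-α) (t - z.1) * kap (α - 1) (z.1 - z.2) : ℝ) : ℂ) * w z.2 with hΦ
  have hmeas : StronglyMeasurable Φ := by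
    refine StronglyMeasurable.mul ?_ (hw.comp_measurable measurable_snd)
    exact Measurable.stronglyMeasurable (by fun_prop)
  have hnorm : ∀ p, (∫ s, ‖Φ (s, p)‖) = (if p < t then betaC α else 0) * ‖w p‖ := by
    intro p
    rw [← (beta_conv hα t p).2, ← integral_mul_const]
    congr 1; ext s
    simp only [hΦ, norm_mul, Complex.norm_real]
    rw [Real.norm_of_nonneg (kap_nonneg _ _), Real.norm_of_nonneg (kap_nonneg _ _)]
  have hdom : ∀ p, (if p < t then betaC α else 0) * ‖w p‖ ≤ betaC α * ‖w p‖ := by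
    intro p
    split_ifs
    · exact le_rfl
    · rw [zero_mul]; positivity
  have hnn : ∀ p, 0 ≤ (if p < t then betaC α else 0) * ‖w p‖ := by
    intro p
    split_ifs
    · positivity
    · rw [zero_mul]
  have hnormint : Integrable (fun p => (if p < t then betaC α else 0) * ‖w p‖) := by
    refine (hwi.norm.const_mul (betaC α)).mono' ?_ (Eventually.of_forall fun p => ?_)
    · refine AEStronglyMeasurable.mul ?_ hwi.norm.aestronglyMeasurable
      exact (Measurable.ite measurableSet_Iio measurable_const
        measurable_const).aestronglyMeasurable
    · rw [Real.norm_of_nonneg (hnn p)]; exact hdom p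
  have hint : Integrable Φ (volume.prod volume) := by
    rw [integrable_prod_iff' hmeas.aestronglyMeasurable]
    refine ⟨Eventually.of_forall fun p => ?_, ?_⟩
    · exact ((beta_conv hα t p).1.ofReal (𝕜 := ℂ)).mul_const (w p)
    · simp_rw [hnorm]; exact hnormint
  have hrow : ∀ s, (∫ p, Φ (s, p)) = (kap (-α) (t - s) : ℂ) * rl α w s := by
    intro s
    rw [rl, ← integral_const_mul]
    congr 1; ext p
    simp only [hΦ]; push_cast; ring
  refine ⟨?_, ?_, ?_⟩
  · simp_rw [← hrow]; exact hint.integral_prod_left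
  · simp_rw [← hrow]
    rw [integral_integral_swap (f := fun s p => Φ (s, p)) hint, ← integral_const_mul]
    congr 1; ext p
    have : (∫ s, Φ (s, p)) =
        ((∫ s, kap (-α) (t - s) * kap (α - 1) (s - p) : ℝ) : ℂ) * w p := by
      rw [← integral_complex_ofReal, ← integral_mul_const]
    rw [this, (beta_conv hα t p).2]
    split_ifs <;> simp
  · simp_rw [← hrow]
    calc (∫ s, ‖∫ p, Φ (s, p)‖) ≤ ∫ s, ∫ p, ‖Φ (s, p)‖ := by
          refine integral_mono hint.integral_prod_left.norm hint.norm.integral_prod_left ?_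
          intro s; exact norm_integral_le_integral_norm _
      _ = ∫ p, (if p < t then betaC α else 0) * ‖w p‖ := by
          rw [integral_integral_swap (f := fun s p => ‖Φ (s, p)‖) hint.norm]
          simp_rw [hnorm]
      _ ≤ betaC α * ∫ p, ‖w p‖ := by
          rw [← integral_const_mul]
          exact integral_mono hnormint (hwi.norm.const_mul _) hdom

/-- The derivative `u' = I^α w` on `(0,1]`, extended by zero. -/
noncomputable def der (α : ℝ) (w : ℝ → ℂ) : ℝ → ℂ :=
  (Ioc (0:ℝ) 1).indicator (fun s => ((Real.Gamma α)⁻¹ : ℂ) * rl α w s)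

lemma abel_der {α : ℝ} (hα : α ∈ Ioo (0:ℝ) 1) {w : ℝ → ℂ} (hw : StronglyMeasurable w)
    (hwi : Integrable w) (hw0 : ∀ x ∉ Ioc (0:ℝ) 1, w x = 0) {t : ℝ} (ht : t ≤ 1) :
    Integrable (fun s => (kap (-α) (t - s) : ℂ) * der α w s) ∧
    (∫ s, (kap (-α) (t - s) : ℂ) * der α w s) =
      ((betaC α / Real.Gamma α : ℝ) : ℂ) * ∫ p, (if p < t then w p else 0) ∧
    (∫ s, ‖(kap (-α) (t - s) : ℂ) * der α w s‖) ≤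
      (betaC α / Real.Gamma α) * ∫ p, ‖w p‖ := by
  obtain ⟨h1, h2, h3⟩ := abel_rl hα hw hwi t
  have hG := Real.Gamma_pos_of_pos hα.1
  have e : (fun s => (kap (-α) (t - s) : ℂ) * der α w s) =
      fun s => ((Real.Gamma α)⁻¹ : ℂ) * ((kap (-α) (t - s) : ℂ) * rl α w s) := by
    ext s
    by_cases hst : s < t
    · by_cases hs : 0 < s
      · rw [der, indicator_of_mem (show s ∈ Ioc (0:ℝ) 1 from ⟨hs, by linarith⟩)]
        ring
      · have : rl α w s = 0 := by
          rw [rl, ← integral_zero ℝ ℂ]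
          congr 1; ext p
          by_cases hp : p < s
          · rw [hw0 p (fun h => by linarith [h.1]), mul_zero]
          · rw [kap_of_nonpos (by linarith)]; simp
        rw [der, indicator_of_notMem (fun h => hs h.1), this]
        simp
    · rw [kap_of_nonpos (by linarith)]; simp
  rw [e]
  refine ⟨h1.const_mul _, ?_, ?_⟩
  · rw [integral_const_mul, h2]; push_cast; ring
  · have : ∀ s, ‖(kap (-α) (t - s) : ℂ) * der α w s‖ =
        (Real.Gamma α)⁻¹ * ‖(kap (-α) (t - s) : ℂ) * rl α w s‖ := by
      intro s
      rw [congrFun e s, norm_mul, norm_inv, Complex.norm_real, Real.norm_of_nonneg hG.le]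
    simp_rw [this]
    rw [integral_const_mul]
    calc _ ≤ (Real.Gamma α)⁻¹ * (betaC α * ∫ p, ‖w p‖) := by gcongr
      _ = _ := by ring

/-! ### The energy form and the pairing -/

/-- The energy density `(t - s)_+ ^ (-α) f(s) conj f(t)`. -/
noncomputable def enK (α : ℝ) (f : ℝ → ℂ) (z : ℝ × ℝ) : ℂ :=
  (kap (-α) (z.2 - z.1) : ℂ) * (f z.1 * (starRingEnd ℂ) (f z.2))

lemma conj_integrable {f : ℝ → ℂ} (hf : Integrable f) :
    Integrable (fun t => (starRingEnd ℂ) (f t)) :=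
  (LinearIsometryEquiv.integrable_comp_iff Complex.conjLIE).2 hf

/-- The pairing of `w` with a primitive of `f` is a multiple of the energy of `f`, provided `f`
solves the Abel equation with right-hand side the primitive of `w`. -/
lemma energy_pairing {α D : ℝ} {f w : ℝ → ℂ} (hf : StronglyMeasurable f)
    (hfi : Integrable f) (hf0 : ∀ x ∉ Ioc (0:ℝ) 1, f x = 0) (hwi : Integrable w)
    (hA : ∀ t ≤ 1, Integrable (fun s => (kap (-α) (t - s) : ℂ) * f s) ∧
      (∫ s, (kap (-α) (t - s) : ℂ) * f s) = (D : ℂ) * (∫ p, (if p < t then w p else 0)) ∧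
      (∫ s, ‖(kap (-α) (t - s) : ℂ) * f s‖) ≤ D * ∫ p, ‖w p‖) :
    Integrable (enK α f) (volume.prod volume) ∧
    (∫ z, enK α f z ∂(volume.prod volume)) =
      D * ∫ x, w x * (starRingEnd ℂ) (∫ t, (if x < t then f t else 0)) := by
  have hcol : ∀ t, (fun s => enK α f (s, t)) =
      fun s => ((kap (-α) (t - s) : ℂ) * f s) * (starRingEnd ℂ) (f t) := by
    intro t; ext s; simp only [enK]; ring
  have hcm : Measurable fun t => (starRingEnd ℂ) (f t) :=
    Complex.continuous_conj.measurable.comp hf.measurable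
  have hmeas : StronglyMeasurable (enK α f) := by
    refine Measurable.stronglyMeasurable ?_
    refine Measurable.mul (by fun_prop) ((hf.measurable.comp measurable_fst).mul
      (hcm.comp measurable_snd))
  have hI : Integrable (enK α f) (volume.prod volume) := by
    rw [integrable_prod_iff' hmeas.aestronglyMeasurable]
    refine ⟨Eventually.of_forall fun t => ?_, ?_⟩
    · rw [hcol t]
      by_cases ht : t ≤ 1
      · exact (hA t ht).1.mul_const _
      · rw [hf0 t (fun h => ht h.2)]; simp
    · refine (hfi.norm.const_mul (D * ∫ p, ‖w p‖)).mono'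
        hmeas.norm.integral_prod_left.aestronglyMeasurable (Eventually.of_forall fun t => ?_)
      rw [Real.norm_of_nonneg (integral_nonneg fun _ => norm_nonneg _)]
      simp_rw [congrFun (hcol t), norm_mul _ ((starRingEnd ℂ) (f t))]
      rw [integral_mul_const, RCLike.norm_conj]
      by_cases ht : t ≤ 1
      · exact mul_le_mul_of_nonneg_right (hA t ht).2.2 (norm_nonneg _)
      · rw [hf0 t (fun h => ht h.2)]; simp
  refine ⟨hI, ?_⟩
  rw [integral_prod_symm _ hI]
  have h1 : ∀ t, (∫ s, enK α f (s, t)) =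
      D * ∫ x, (if x < t then w x * (starRingEnd ℂ) (f t) else 0) := by
    intro t
    rw [hcol t, integral_mul_const]
    by_cases ht : t ≤ 1
    · rw [(hA t ht).2.1, mul_assoc, ← integral_mul_const]
      congr 2; ext p; split_ifs <;> simp
    · rw [hf0 t (fun h => ht h.2)]; simp
  have hprod : Integrable (fun z : ℝ × ℝ =>
      (if z.1 < z.2 then w z.1 * (starRingEnd ℂ) (f z.2) else 0)) (volume.prod volume) := by
    have h := (hwi.mul_prod (conj_integrable hfi)).indicator
      (measurableSet_lt (measurable_fst (α := ℝ) (β := ℝ)) measurable_snd)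
    refine h.congr (Eventually.of_forall fun z => ?_)
    simp [indicator]
  simp_rw [h1]
  rw [integral_const_mul, ← integral_integral_swap
    (f := fun x t => if x < t then w x * (starRingEnd ℂ) (f t) else 0) hprod]
  congr 2; ext x
  rw [← integral_conj, ← integral_const_mul]
  congr 1; ext t
  split_ifs <;> simp

/-! ### The Gagliardo seminorm as an energy -/

/-- `|∫ g|² = 2 Re ∬_{s < t} g(s) conj g(t)`. -/
lemma normSq_integral {g : ℝ → ℂ} (hg : Integrable g) :
    ‖∫ s, g s‖ ^ 2 = 2 * (∫ z : ℝ × ℝ, (if z.1 < z.2 then g z.1 * (starRingEnd ℂ) (g z.2) else 0)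
      ∂(volume.prod volume)).re := by
  set h : ℝ × ℝ → ℂ := fun z => g z.1 * (starRingEnd ℂ) (g z.2) with hh
  set A : ℝ × ℝ → ℂ := fun z => if z.1 < z.2 then h z else 0 with hA
  have hint : Integrable h (volume.prod volume) := hg.mul_prod (conj_integrable hg)
  have hAi : Integrable A (volume.prod volume) := by
    refine (hint.indicator
      (measurableSet_lt (measurable_fst (α := ℝ) (β := ℝ)) measurable_snd)).congr
      (Eventually.of_forall fun z => ?_)
    simp [indicator, hA]
  have hBi : Integrable (fun z => (starRingEnd ℂ) (A z.swap)) (volume.prod volume) :=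
    (LinearIsometryEquiv.integrable_comp_iff Complex.conjLIE).2 hAi.swap
  have hdiag : ∀ᵐ z : ℝ × ℝ ∂(volume.prod volume), z.1 ≠ z.2 := by
    have hm : MeasurableSet {z : ℝ × ℝ | z.1 = z.2} :=
      measurableSet_eq_fun measurable_fst measurable_snd
    have : (volume.prod volume) {z : ℝ × ℝ | z.1 = z.2} = 0 := by
      rw [Measure.measure_prod_null hm]
      refine Eventually.of_forall fun x => ?_
      have : Prod.mk x ⁻¹' {z : ℝ × ℝ | z.1 = z.2} = {x} := by
        ext y; simp [eq_comm]
      simp only [this]; simp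
    rw [ae_iff]; simpa using this
  have hsum : h =ᵐ[volume.prod volume] fun z => A z + (starRingEnd ℂ) (A z.swap) := by
    filter_upwards [hdiag] with z hz
    rcases lt_or_gt_of_ne hz with h1 | h1
    · simp [hA, h1, h1.not_gt]
    · simp [hA, h1, h1.not_gt, hh, mul_comm]
  have e1 : ∫ z, h z ∂(volume.prod volume) = (∫ s, g s) * (starRingEnd ℂ) (∫ s, g s) := by
    rw [hh, integral_prod_mul (fun s => g s) (fun s => (starRingEnd ℂ) (g s)), integral_conj]
  have e2 : ∫ z, h z ∂(volume.prod volume) = (∫ z, A z ∂(volume.prod volume)) +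
      (starRingEnd ℂ) (∫ z, A z ∂(volume.prod volume)) := by
    rw [integral_congr_ae hsum, integral_add hAi hBi, integral_conj, integral_prod_swap]
  rw [e1, Complex.mul_conj', Complex.add_conj] at e2
  exact_mod_cast e2

/-- The one-sided Gagliardo density `(x - y)_+ ^ (-2-α) |∫_y^x f|²` at `q = (x, y)`. -/
noncomputable def gagP (α : ℝ) (f : ℝ → ℂ) (q : ℝ × ℝ) : ℝ :=
  kap (-2 - α) (q.1 - q.2) * ‖∫ s in Ioo q.2 q.1, f s‖ ^ 2

lemma gagP_nonneg (α : ℝ) (f : ℝ → ℂ) (q : ℝ × ℝ) : 0 ≤ gagP α f q :=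
  mul_nonneg (kap_nonneg _ _) (by positivity)

/-- The Gagliardo seminorm of a primitive of `f` over the whole plane equals a multiple of the
energy of `f`. -/
lemma gagP_integral {α : ℝ} (hα : 0 < α) {f : ℝ → ℂ} (hf : StronglyMeasurable f)
    (hfi : Integrable f) (hJ : Integrable (enK α f) (volume.prod volume)) :
    Integrable (gagP α f) (volume.prod volume) ∧
    (∫ q, gagP α f q ∂(volume.prod volume)) =
      2 * (α * (1 + α))⁻¹ * (∫ z, enK α f z ∂(volume.prod volume)).re := by
  set μ : Measure (ℝ × ℝ) := volume.prod volume with hμ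
  set h : ℝ × ℝ → ℂ := fun z => f z.1 * (starRingEnd ℂ) (f z.2) with hh
  set Ψ : (ℝ × ℝ) × (ℝ × ℝ) → ℂ := fun z => (gagK α z.1 z.2 : ℂ) * h z.1 with hΨ
  have hcm : Measurable fun t => (starRingEnd ℂ) (f t) :=
    Complex.continuous_conj.measurable.comp hf.measurable
  have hhm : Measurable h := (hf.measurable.comp measurable_fst).mul (hcm.comp measurable_snd)
  have hmeas : Measurable Ψ :=
    (Complex.measurable_ofReal.comp (measurable_gagK α)).mul (hhm.comp measurable_fst)
  have hin : ∀ p, (∫ q, Ψ (p, q) ∂μ) = ((α * (1 + α))⁻¹ : ℝ) * enK α f p := by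
    intro p
    have : (∫ q, Ψ (p, q) ∂μ) = ((∫ q, gagK α p q ∂μ : ℝ) : ℂ) * h p := by
      rw [← integral_complex_ofReal, ← integral_mul_const]
    rw [this, hμ, ← show (volume : Measure (ℝ × ℝ)) = volume.prod volume from rfl,
      (gagK_integral hα p).2]
    simp only [enK, hh]; push_cast; ring
  have hI : Integrable Ψ (μ.prod μ) := by
    rw [integrable_prod_iff hmeas.aestronglyMeasurable]
    refine ⟨Eventually.of_forall fun p => ?_, ?_⟩
    · exact ((gagK_integral hα p).1.ofReal (𝕜 := ℂ)).mul_const (h p)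
    · have : ∀ p, (∫ q, ‖Ψ (p, q)‖ ∂μ) = (α * (1 + α))⁻¹ * ‖enK α f p‖ := by
        intro p
        have : (∫ q, ‖Ψ (p, q)‖ ∂μ) = (∫ q, gagK α p q ∂μ) * ‖h p‖ := by
          rw [← integral_mul_const]
          congr 1; ext q
          simp only [hΨ, norm_mul, Complex.norm_real, Real.norm_of_nonneg (gagK_nonneg _ _ _)]
        rw [this, hμ, ← show (volume : Measure (ℝ × ℝ)) = volume.prod volume from rfl,
          (gagK_integral hα p).2]
        simp only [enK, norm_mul, Complex.norm_real, Real.norm_of_nonneg (kap_nonneg _ _), hh]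
        ring
      simp_rw [this]
      exact hJ.norm.const_mul _
  have hP : ∀ q, gagP α f q = 2 * (∫ p, Ψ (p, q) ∂μ).re := by
    rintro ⟨x, y⟩
    have hg := hfi.indicator (measurableSet_Ioo (a := y) (b := x))
    have e := normSq_integral hg
    rw [integral_indicator measurableSet_Ioo] at e
    have : (∫ p, Ψ (p, (x, y)) ∂μ) = (kap (-2 - α) (x - y) : ℂ) *
        ∫ z : ℝ × ℝ, (if z.1 < z.2 then (Ioo y x).indicator f z.1 *
          (starRingEnd ℂ) ((Ioo y x).indicator f z.2) else 0) ∂(volume.prod volume) := by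
      rw [← integral_const_mul]
      congr 1; ext ⟨s, t⟩
      simp only [hΨ, gagK, hh]
      by_cases c : y < s ∧ s < t ∧ t < x
      · obtain ⟨c1, c2, c3⟩ := c
        rw [if_pos ⟨c1, c2, c3⟩, if_pos c2, indicator_of_mem (show s ∈ Ioo y x from ⟨c1, c2.trans c3⟩),
          indicator_of_mem (show t ∈ Ioo y x from ⟨c1.trans c2, c3⟩), kap_of_pos (by linarith)]
      · rw [if_neg c]
        by_cases c2 : s < t
        · rw [if_pos c2]
          by_cases c1 : y < s
          · rw [indicator_of_notMem (show t ∉ Ioo y x from fun h => c ⟨c1, c2, h.2⟩)]; simp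
          · rw [indicator_of_notMem (show s ∉ Ioo y x from fun h => c1 h.1)]; simp
        · rw [if_neg c2]; simp
    rw [this, Complex.re_ofReal_mul, gagP]
    simp only
    rw [e]; ring
  have hR := hI.integral_prod_right
  constructor
  · have : gagP α f = fun q => 2 * (∫ p, Ψ (p, q) ∂μ).re := funext hP
    rw [this]
    exact hR.re.const_mul 2
  · simp_rw [hP]
    rw [integral_const_mul]
    have e3 : (∫ q, (∫ p, Ψ (p, q) ∂μ).re ∂μ) = (∫ q, ∫ p, Ψ (p, q) ∂μ ∂μ).re :=
      integral_re hR
    rw [e3, ← integral_integral_swap (f := fun p q => Ψ (p, q)) hI]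
    simp_rw [hin]
    rw [integral_const_mul, Complex.re_ofReal_mul]
    ring

/-! ### Bounds for the Sobolev norm -/

lemma seminorm_le {α : ℝ} {f u : ℝ → ℂ}
    (hd : ∀ x y, 0 ≤ x → x ≤ y → y ≤ 1 → ∫ s in Ioo x y, f s = u y - u x)
    (hP : Integrable (gagP α f) (volume.prod volume)) :
    sobSeminormSq ((1 + α) / 2) u ≤ 2 * ∫ q, gagP α f q ∂(volume.prod volume) := by
  have hpos : ∀ x y, 0 < y → y < x → x ≤ 1 →
      gagP α f (x, y) = ‖u x - u y‖ ^ 2 / (x - y) ^ (2 + α) := by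
    intro x y h1 h2 h3
    have h4 : 0 < x - y := sub_pos.2 h2
    simp only [gagP]
    rw [hd y x h1.le h2.le h3, kap_of_pos h4, show -2 - α = -(2 + α) by ring,
      Real.rpow_neg h4.le]
    ring
  have hneg : ∀ x y, x ≤ y → gagP α f (x, y) = 0 := by
    intro x y h
    simp only [gagP]
    rw [kap_of_nonpos (by linarith), zero_mul]
  have hkey : ∀ x ∈ Ioc (0:ℝ) 1, ∀ y ∈ Ioc (0:ℝ) 1,
      ‖u x - u y‖ ^ 2 / |x - y| ^ (1 + 2 * ((1 + α) / 2)) =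
        gagP α f (x, y) + gagP α f (y, x) := by
    intro x hx y hy
    rw [show 1 + 2 * ((1 + α) / 2) = 2 + α by ring]
    rcases lt_trichotomy x y with h | h | h
    · rw [hneg x y h.le, hpos y x hx.1 h hy.2, abs_sub_comm, abs_of_pos (sub_pos.2 h),
        norm_sub_rev, zero_add]
    · subst h
      rw [hneg x x le_rfl]; simp
    · rw [hneg y x h.le, hpos x y hy.1 h hx.2, abs_of_pos (sub_pos.2 h), add_zero]
  have hs : Integrable (fun z : ℝ × ℝ => gagP α f z.swap) (volume.prod volume) := hP.swap
  have hsum := hP.add hs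
  calc sobSeminormSq ((1 + α) / 2) u
      = ∫ x in Ioc (0:ℝ) 1, ∫ y in Ioc (0:ℝ) 1, (gagP α f (x, y) + gagP α f (y, x)) := by
        simp only [sobSeminormSq, intervalIntegral.integral_of_le zero_le_one]
        refine setIntegral_congr_fun measurableSet_Ioc fun x hx => ?_
        exact setIntegral_congr_fun measurableSet_Ioc fun y hy => hkey x hx y hy
    _ = ∫ z in Ioc (0:ℝ) 1 ×ˢ Ioc (0:ℝ) 1, (gagP α f z + gagP α f z.swap)
          ∂(volume.prod volume) :=
        (setIntegral_prod (fun z => gagP α f z + gagP α f z.swap) hsum.integrableOn).symm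
    _ ≤ ∫ z, (gagP α f z + gagP α f z.swap) ∂(volume.prod volume) :=
        setIntegral_le_integral hsum (Eventually.of_forall fun z =>
          add_nonneg (gagP_nonneg _ _ _) (gagP_nonneg _ _ _))
    _ = 2 * ∫ q, gagP α f q ∂(volume.prod volume) := by
        rw [integral_add hP hs, integral_prod_swap]; ring

/-- A Poincaré inequality. Since `u(1) = 0`, extending `u` by zero to `(1, 2)` keeps it a primitive
of `f`, and the part of the Gagliardo seminorm with `x ∈ (0,1)`, `y ∈ (1,2)` controls `|u(x)|²`. -/
lemma l2_le {α : ℝ} (hα : 0 < α) {f u : ℝ → ℂ} (huc : ContinuousOn u (Icc 0 1))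
    (hU : ∀ x ∈ Ioc (0:ℝ) 1, ∀ y, 1 < y → ∫ s in Ioo x y, f s = - u x)
    (hP : Integrable (gagP α f) (volume.prod volume)) :
    2 ^ (-2 - α) * L2normSq u ≤ ∫ q, gagP α f q ∂(volume.prod volume) := by
  have hs : Integrable (fun z : ℝ × ℝ => gagP α f z.swap) (volume.prod volume) := hP.swap
  have hu2 : IntegrableOn (fun x => 2 ^ (-2 - α) * ‖u x‖ ^ 2) (Ioc (0:ℝ) 1) :=
    ((continuousOn_const.mul (huc.norm.pow 2)).integrableOn_Icc).mono_set Ioc_subset_Icc_self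
  have hQ : IntegrableOn (fun z : ℝ × ℝ => 2 ^ (-2 - α) * ‖u z.1‖ ^ 2 * 1)
      (Ioc (0:ℝ) 1 ×ˢ Ioc (1:ℝ) 2) (volume.prod volume) := by
    rw [IntegrableOn, ← Measure.prod_restrict]
    exact Integrable.mul_prod (g := fun _ : ℝ => (1:ℝ)) hu2 (by simp)
  calc 2 ^ (-2 - α) * L2normSq u
      = ∫ x in Ioc (0:ℝ) 1, ∫ y in Ioc (1:ℝ) 2, 2 ^ (-2 - α) * ‖u x‖ ^ 2 * 1 := by
        rw [L2normSq, intervalIntegral.integral_of_le zero_le_one, ← integral_const_mul]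
        congr 1; ext x
        simp
        norm_num
    _ = ∫ z in Ioc (0:ℝ) 1 ×ˢ Ioc (1:ℝ) 2, 2 ^ (-2 - α) * ‖u z.1‖ ^ 2 * 1
          ∂(volume.prod volume) := (setIntegral_prod _ hQ).symm
    _ ≤ ∫ z in Ioc (0:ℝ) 1 ×ˢ Ioc (1:ℝ) 2, gagP α f z.swap ∂(volume.prod volume) := by
        refine setIntegral_mono_on hQ hs.integrableOn
          (measurableSet_Ioc.prod measurableSet_Ioc) ?_
        rintro ⟨x, y⟩ ⟨hx, hy⟩
        have hx1 := hx.1; have hx2 := hx.2; have hy1 := hy.1; have hy2 := hy.2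
        simp only at hx1 hx2 hy1 hy2
        simp only [gagP, Prod.swap, mul_one]
        rw [hU x hx y hy1, norm_neg, kap_of_pos (by linarith)]
        refine mul_le_mul_of_nonneg_right ?_ (by positivity)
        exact Real.rpow_le_rpow_of_nonpos (by linarith) (by linarith) (by linarith)
    _ ≤ ∫ z, gagP α f z.swap ∂(volume.prod volume) :=
        setIntegral_le_integral hs (Eventually.of_forall fun z => gagP_nonneg _ _ _)
    _ = ∫ q, gagP α f q ∂(volume.prod volume) := integral_prod_swap _

/-! ### Coercivity -/

/-- On `(0,1]` the fractional integral `I^α w` is the function `der α w'` for any `w'` that is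
a.e. equal to `w` on `(0,1]` and vanishes elsewhere. -/
lemma fracInt_eq_der {α : ℝ} (hα : α ∈ Ioo (0:ℝ) 1) {w w' : ℝ → ℂ}
    (hww : w =ᵐ[volume.restrict (Ioc 0 1)] w') (hw0 : ∀ x ∉ Ioc (0:ℝ) 1, w' x = 0)
    {x : ℝ} (hx : x ∈ Ioc (0:ℝ) 1) : fracInt α w x = der α w' x := by
  rw [fracInt, if_neg hα.1.ne', der, indicator_of_mem hx, intervalIntegral.integral_of_le hx.1.le,
    ← integral_indicator measurableSet_Ioc, Complex.real_smul, Complex.ofReal_inv, rl]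
  congr 1
  refine integral_congr_ae ?_
  filter_upwards [(ae_restrict_iff' measurableSet_Ioc).1 hww] with p hp
  by_cases h : p ∈ Ioc 0 x
  · rw [indicator_of_mem h, hp ⟨h.1, h.2.trans hx.2⟩]
    rcases h.2.lt_or_eq with h2 | h2
    · rw [kap_of_pos (sub_pos.2 h2)]
    -- both kernels take the value `0` at the origin
    · rw [h2, sub_self, kap_of_nonpos le_rfl, Real.zero_rpow (by linarith [hα.2])]
  · rw [indicator_of_notMem h]
    by_cases h0 : 0 < p
    · have : x < p := by
        by_contra hc
        exact h ⟨h0, not_lt.1 hc⟩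
      rw [kap_of_nonpos (by linarith)]; simp
    · rw [hw0 p (fun hh => h0 hh.1), mul_zero]

/-- coercivity of -(d/dx)D^a in the H^{(1+a)/2}(0,1) norm. -/
theorem statement_1 (α : ℝ) (hα : α ∈ Set.Ioo (0:ℝ) 1) :
    ∃ c > (0:ℝ), ∀ u w : ℝ → ℂ, InGraphA α u w →
      c * sobNormSq ((1 + α) / 2) u ≤
        (∫ x in (0:ℝ)..1, (-(w x)) * (starRingEnd ℂ) (u x)).re := by
  have hG := Real.Gamma_pos_of_pos hα.1
  have hD : 0 < betaC α / Real.Gamma α := div_pos (betaC_pos hα) hG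
  have hα0 := hα.1
  set D := betaC α / Real.Gamma α with hDdef
  set K : ℝ := ((2:ℝ) ^ (2 + α) + 2) * (2 * (α * (1 + α))⁻¹ * D) with hK
  have hKpos : 0 < K := by positivity
  refine ⟨K⁻¹, inv_pos.2 hKpos, ?_⟩
  intro u w ⟨hu1, ⟨hwm, hw2⟩, hfrac, hu⟩
  -- replace `w` by a strongly measurable representative supported in `(0,1]`
  set w' : ℝ → ℂ := (Ioc (0:ℝ) 1).indicator (hwm.mk w) with hw'
  have hw'm : StronglyMeasurable w' := hwm.stronglyMeasurable_mk.indicator measurableSet_Ioc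
  have hww : w =ᵐ[volume.restrict (Ioc 0 1)] w' :=
    hwm.ae_eq_mk.trans (indicator_ae_eq_restrict measurableSet_Ioc).symm
  have hw0 : ∀ x ∉ Ioc (0:ℝ) 1, w' x = 0 := fun x hx => indicator_of_notMem hx _
  have hw1 : IntegrableOn w (Ioc (0:ℝ) 1) :=
    ((memLp_two_iff_integrable_sq_norm hwm).2 hw2).integrable (by norm_num)
  have hw'i : Integrable w' := by
    rw [hw', integrable_indicator_iff measurableSet_Ioc]
    exact hw1.congr hwm.ae_eq_mk
  set f := der α w' with hf
  have hfm : StronglyMeasurable f :=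
    ((stronglyMeasurable_rl hw'm).const_mul _).indicator measurableSet_Ioc
  have hf0 : ∀ x ∉ Ioc (0:ℝ) 1, f x = 0 := fun x hx => indicator_of_notMem hx _
  have hff : ∀ x ∈ Ioc (0:ℝ) 1, fracInt α w x = f x := fun x hx => fracInt_eq_der hα hww hw0 hx
  have hfi : Integrable f := by
    have h1 : IntegrableOn f (Ioc 0 1) :=
      ((intervalIntegrable_iff_integrableOn_Ioc_of_le zero_le_one).1 hfrac).congr_fun hff
        measurableSet_Ioc
    have h2 : f = (Ioc (0:ℝ) 1).indicator f := by
      ext x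
      by_cases hx : x ∈ Ioc (0:ℝ) 1
      · rw [indicator_of_mem hx]
      · rw [indicator_of_notMem hx, hf0 x hx]
    rw [h2, integrable_indicator_iff measurableSet_Ioc]
    exact h1
  have hu' : ∀ x ∈ Icc (0:ℝ) 1, u x = u 0 + ∫ t in (0:ℝ)..x, f t := by
    intro x hx
    rw [hu x hx, intervalIntegral.integral_of_le hx.1, intervalIntegral.integral_of_le hx.1]
    congr 1
    exact setIntegral_congr_fun measurableSet_Ioc fun t ht => hff t ⟨ht.1, ht.2.trans hx.2⟩
  have hd : ∀ x y, 0 ≤ x → x ≤ y → y ≤ 1 → ∫ s in Ioo x y, f s = u y - u x := by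
    intro x y h1 h2 h3
    rw [← integral_Ioc_eq_integral_Ioo, ← intervalIntegral.integral_of_le h2,
      hu' x ⟨h1, h2.trans h3⟩, hu' y ⟨h1.trans h2, h3⟩, add_sub_add_left_eq_sub,
      intervalIntegral.integral_interval_sub_left hfi.intervalIntegrable hfi.intervalIntegrable]
  have htail : ∀ x ∈ Ioc (0:ℝ) 1, (∫ t, if x < t then f t else 0) = - u x := by
    intro x hx
    have h := hd x 1 hx.1.le hx.2 le_rfl
    rw [hu1, zero_sub, ← integral_Ioc_eq_integral_Ioo, ← integral_indicator measurableSet_Ioc] at h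
    rw [← h]
    congr 1; ext t
    by_cases h1 : x < t
    · by_cases h2 : t ≤ 1
      · rw [if_pos h1, indicator_of_mem (show t ∈ Ioc x 1 from ⟨h1, h2⟩)]
      · rw [if_pos h1, indicator_of_notMem (fun hh => h2 hh.2), hf0 t (fun hh => h2 hh.2)]
    · rw [if_neg h1, indicator_of_notMem (fun hh => h1 hh.1)]
  have hU : ∀ x ∈ Ioc (0:ℝ) 1, ∀ y, 1 < y → ∫ s in Ioo x y, f s = - u x := by
    intro x hx y hy
    rw [← htail x hx, ← integral_indicator measurableSet_Ioo]
    congr 1; ext t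
    by_cases h1 : x < t
    · by_cases h2 : t < y
      · rw [if_pos h1, indicator_of_mem (show t ∈ Ioo x y from ⟨h1, h2⟩)]
      · rw [if_pos h1, indicator_of_notMem (fun hh => h2 hh.2),
          hf0 t (fun hh => h2 (hh.2.trans_lt hy))]
    · rw [if_neg h1, indicator_of_notMem (fun hh => h1 hh.1)]
  have huc : ContinuousOn u (Icc 0 1) := by
    have hc : Continuous fun x => u 0 + ∫ t in (0:ℝ)..x, f t :=
      continuous_const.add (intervalIntegral.continuous_primitive
        (fun _ _ => hfi.intervalIntegrable) 0)
    exact hc.continuousOn.congr hu'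
  obtain ⟨hJ, hJval⟩ := energy_pairing (α := α) (D := D) hfm hfi hf0 hw'i
    (fun t ht => abel_der hα hw'm hw'i hw0 ht)
  obtain ⟨hP, hPval⟩ := gagP_integral hα.1 hfm hfi hJ
  have hpair : (∫ x in (0:ℝ)..1, (-(w x)) * (starRingEnd ℂ) (u x)) =
      ∫ x, w' x * (starRingEnd ℂ) (∫ t, (if x < t then f t else 0)) := by
    rw [intervalIntegral.integral_of_le zero_le_one, ← integral_indicator measurableSet_Ioc]
    refine integral_congr_ae ?_
    filter_upwards [(ae_restrict_iff' measurableSet_Ioc).1 hww] with x hx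
    by_cases h : x ∈ Ioc (0:ℝ) 1
    · rw [indicator_of_mem h, htail x h, hx h]; simp
    · rw [indicator_of_notMem h, hw0 x h, zero_mul]
  rw [← hpair] at hJval
  rw [hJval, Complex.re_ofReal_mul] at hPval
  have h1 := seminorm_le hd hP
  have h2 := l2_le hα.1 huc hU hP
  have h3 : L2normSq u ≤ (2:ℝ) ^ (2 + α) * ∫ q, gagP α f q ∂(volume.prod volume) := by
    have e : (2:ℝ) ^ (2 + α) * 2 ^ (-2 - α) = 1 := by
      rw [← Real.rpow_add two_pos, show 2 + α + (-2 - α) = (0:ℝ) by ring, Real.rpow_zero]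
    calc L2normSq u = (2:ℝ) ^ (2 + α) * (2 ^ (-2 - α) * L2normSq u) := by
          rw [← mul_assoc, e, one_mul]
      _ ≤ _ := by gcongr
  rw [inv_mul_le_iff₀ hKpos, sobNormSq]
  calc _ ≤ ((2:ℝ) ^ (2 + α) + 2) * ∫ q, gagP α f q ∂(volume.prod volume) := by linarith
    _ = _ := by rw [hPval, hK]; ring
end
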